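/- For every ρ ∈ [0,1] and n ≥ 2, there exists at least one equilibrium point f^∞ ∈ ℝⁿ of the spatially homogeneous system, i.e., a vector with f^∞_j ≥ 0 for all j, ∑_j f^∞_j = ρ, and ∑_{h,k=1}^n A_{hk}^j[ρ] f^∞_h f^∞_k = ρ f^∞_j for every j. -/

import Mathlib

open Finset

lemma pigeon_pair {α β : Type*} [DecidableEq α] [DecidableEq β] (S : Finset α) (f : α → β)
    (h : S.card = (S.image f).card + 1) :
    ∃ a ∈ S, ∃ b ∈ S, a ≠ b ∧ f a = f b ∧
      ∀ i ∈ S, ∀ j ∈ S, f i = f j → i ≠ j → (i = a ∧ j = b) ∨ (i = b ∧ j = a) := by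
  obtain ⟨a, ha, b, hb, hab, hf⟩ := Finset.exists_ne_map_eq_of_card_lt_of_maps_to
    (s := S) (t := S.image f) (by omega) (f := f) (fun x hx => Finset.mem_image_of_mem f hx)
  have key : ∀ a ∈ S, ∀ b ∈ S, a ≠ b → f a = f b → Set.InjOn f (S.erase a : Finset α) := by
    intro a ha b hb hab hf
    rw [← Finset.card_image_iff]
    have : (S.erase a).image f = S.image f := by
      apply Finset.Subset.antisymm (Finset.image_subset_image (Finset.erase_subset _ _))
      intro y hy
      obtain ⟨x, hx, rfl⟩ := Finset.mem_image.1 hy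
      by_cases hxa : x = a
      · subst hxa
        rw [hf]
        exact Finset.mem_image_of_mem f (Finset.mem_erase.2 ⟨hab.symm, hb⟩)
      · exact Finset.mem_image_of_mem f (Finset.mem_erase.2 ⟨hxa, hx⟩)
    rw [this, Finset.card_erase_of_mem ha]
    omega
  have h1 := key a ha b hb hab hf
  have h2 := key b hb a ha hab.symm hf.symm
  refine ⟨a, ha, b, hb, hab, hf, ?_⟩
  intro i hi j hj hij hne
  by_cases hia : i = a
  · by_cases hjb : j = b
    · exact Or.inl ⟨hia, hjb⟩
    · by_cases hib : i = b
      · exact absurd (hia.symm.trans hib) hab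
      · exact absurd (h2 (by simp [hib, hi]) (by simp [hjb, hj]) hij) hne
  · by_cases hja : j = a
    · by_cases hib : i = b
      · exact Or.inr ⟨hib, hja⟩
      · exact absurd (h2 (by simp [hib, hi]) (by simp [hja, hab, ha]) hij) hne
    · exact absurd (h1 (by simp [hia, hi]) (by simp [hja, hj]) hij) hne

def Dom {I Y : Type*} (r : I → Y → ℕ) (Z : Finset Y) : Prop :=
  ∀ x, ∃ i, ∀ y ∈ Z, r i x ≤ r i y

lemma Dom.mono {I Y : Type*} {r : I → Y → ℕ} {Z W : Finset Y} (h : Dom r W) (hs : Z ⊆ W) :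
    Dom r Z := fun x => by
  obtain ⟨i, hi⟩ := h x
  exact ⟨i, fun y hy => hi y (hs hy)⟩

/-- An internal door lies in exactly two rooms. -/
lemma door_two {I Y : Type*} [Fintype I] [DecidableEq I] [Fintype Y] [DecidableEq Y]
    (r : I → Y → ℕ) (hr : ∀ i, Function.Injective (r i)) (Z : Finset Y) (hZ : Dom r Z)
    (hne : Z.Nonempty) (hcard : Fintype.card I = Z.card + 1)
    (hM : ∀ i, ∃ x, ∀ j, j ≠ i → ∃ y ∈ Z, r j y < r j x) :
    ∃ u v, u ≠ v ∧ u ∉ Z ∧ v ∉ Z ∧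
      ∀ x, (x ∉ Z ∧ Dom r (insert x Z)) ↔ (x = u ∨ x = v) := by
  have hmex : ∀ i, ∃ m ∈ Z, ∀ y ∈ Z, r i m ≤ r i y := fun i =>
    Finset.exists_min_image Z (r i) hne
  choose m hmZ hmin using hmex
  have hsurj : ∀ z ∈ Z, ∃ i, m i = z := by
    intro z hz
    obtain ⟨i, hi⟩ := hZ z
    exact ⟨i, hr i (le_antisymm (hmin i z hz) (hi _ (hmZ i)))⟩
  have himg : (Finset.univ : Finset I).image m = Z := by
    ext z
    simp only [Finset.mem_image, Finset.mem_univ, true_and]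
    exact ⟨fun ⟨i, hi⟩ => hi ▸ hmZ i, hsurj z⟩
  obtain ⟨a, -, b, -, hab, hmab, huniq⟩ := pigeon_pair (Finset.univ : Finset I) m
    (by rw [himg, Finset.card_univ, hcard])
  have huniq' : ∀ i j, m i = m j → i ≠ j → (i = a ∧ j = b) ∨ (i = b ∧ j = a) :=
    fun i j => huniq i (Finset.mem_univ _) j (Finset.mem_univ _)
  have hx : ∀ i, ∃ x, (∀ j, j ≠ i → r j (m j) < r j x) ∧
      ∀ w, (∀ j, j ≠ i → r j (m j) < r j w) → r i w ≤ r i x := by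
    intro i
    obtain ⟨x0, hx0⟩ := hM i
    obtain ⟨x, hx1, hx2⟩ := Finset.exists_max_image
      ({x | ∀ j, j ≠ i → r j (m j) < r j x} : Finset Y) (r i)
      ⟨x0, by
        simp only [Finset.mem_filter, Finset.mem_univ, true_and]
        intro j hj
        obtain ⟨y, hy, hlt⟩ := hx0 j hj
        exact lt_of_le_of_lt (hmin j y hy) hlt⟩
    simp only [Finset.mem_filter, Finset.mem_univ, true_and] at hx1 hx2
    exact ⟨x, hx1, hx2⟩
  choose X hX1 hX2 using hx
  have hnot : ∀ i i', i ≠ i' → m i = m i' → X i ∉ Z := by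
    intro i i' hii hm hin
    obtain ⟨k, hk⟩ := hsurj _ hin
    by_cases hki : k = i
    · have := hX1 i i' hii.symm
      rw [← hm, ← hki, hk, hki] at this
      exact lt_irrefl _ this
    · have := hX1 i k hki
      rw [hk] at this
      exact lt_irrefl _ this
  have hdom : ∀ i, Dom r (insert (X i) Z) := by
    intro i w
    by_cases hw : ∃ k, k ≠ i ∧ r k w ≤ r k (m k)
    · obtain ⟨k, hki, hk⟩ := hw
      refine ⟨k, fun y hy => ?_⟩
      rcases Finset.mem_insert.1 hy with rfl | hy
      · exact hk.trans (hX1 i k hki).le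
      · exact hk.trans (hmin k y hy)
    · push Not at hw
      obtain ⟨k, hk⟩ := hZ w
      have hki : k = i := by
        by_contra hki
        exact absurd (hk _ (hmZ k)) (not_le.2 (hw k hki))
      subst hki
      refine ⟨k, fun y hy => ?_⟩
      rcases Finset.mem_insert.1 hy with rfl | hy
      · exact hX2 k w hw
      · exact hk y hy
  refine ⟨X a, X b, ?_, hnot a b hab hmab, hnot b a hab.symm hmab.symm, ?_⟩
  · intro h
    obtain ⟨k, hk⟩ := hZ (X a)
    have h1 := hk _ (hmZ k)
    by_cases hka : k = a
    · have := hX1 b k (by rw [hka]; exact hab)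
      rw [← h] at this
      omega
    · have := hX1 a k hka
      omega
  · intro x
    constructor
    · rintro ⟨hxZ, hD⟩
      have hlow : ∀ i, r i x < r i (m i) → ∃ j, j ≠ i ∧ m j = m i ∧ r j (m j) < r j x := by
        intro i hi
        obtain ⟨j, hj⟩ := hD (m i)
        have hjx := hj x (Finset.mem_insert_self _ _)
        have hmj : m j = m i := hr j (le_antisymm (hmin j _ (hmZ i))
          (hj _ (Finset.mem_insert_of_mem (hmZ j))))
        refine ⟨j, ?_, hmj, ?_⟩
        · rintro rfl
          omega
        · rw [hmj]
          refine lt_of_le_of_ne hjx ?_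
          intro h
          exact hxZ (hr j h ▸ hmZ i)
      obtain ⟨i, hi⟩ := hD x
      have hi' : r i x < r i (m i) := by
        refine lt_of_le_of_ne (hi _ (Finset.mem_insert_of_mem (hmZ i))) ?_
        intro h
        exact hxZ (hr i h ▸ hmZ i)
      obtain ⟨j, hji, hmj, hjx⟩ := hlow i hi'
      have hxM : ∀ k, k ≠ i → r k (m k) < r k x := by
        intro k hk
        by_contra hcon
        have hk' : r k x < r k (m k) := by
          refine lt_of_le_of_ne (not_lt.1 hcon) ?_
          intro h
          exact hxZ (hr k h ▸ hmZ k)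
        obtain ⟨l, hlk, hml, hlx⟩ := hlow k hk'
        have h1 := huniq' j i hmj hji
        have h2 := huniq' l k hml hlk
        have : k = j := by
          rcases h1 with ⟨h1, h1'⟩ | ⟨h1, h1'⟩ <;> rcases h2 with ⟨h2, h2'⟩ | ⟨h2, h2'⟩
          · exact absurd (h2'.trans h1'.symm) hk
          · exact h2'.trans h1.symm
          · exact h2'.trans h1.symm
          · exact absurd (h2'.trans h1'.symm) hk
        subst this
        omega
      have hxX : x = X i := by
        apply hr i
        apply le_antisymm (hX2 i x hxM)
        obtain ⟨k, hk⟩ := hD (X i)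
        by_cases hki : k = i
        · subst hki
          exact hk x (Finset.mem_insert_self _ _)
        · have h1 := hk _ (Finset.mem_insert_of_mem (hmZ k))
          have h2 := hX1 i k hki
          omega
      rcases huniq' j i hmj hji with ⟨-, h⟩ | ⟨-, h⟩
      · right; rw [hxX, h]
      · left; rw [hxX, h]
    · rintro (rfl | rfl)
      · exact ⟨hnot a b hab hmab, hdom a⟩
      · exact ⟨hnot b a hab.symm hmab.symm, hdom b⟩

lemma scarf {I Y : Type*} [Fintype I] [DecidableEq I] [Fintype Y] [DecidableEq Y]
    (hI : 2 ≤ Fintype.card I)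
    (r : I → Y → ℕ) (hr : ∀ i, Function.Injective (r i)) (s : I → Y)
    (hs : Function.Injective s)
    (hs1 : ∀ i y, r i (s i) ≤ r i y)
    (hs2 : ∀ i j y, i ≠ j → y ∉ Set.range s → r i y < r i (s j))
    (c : Y → I) (hc : ∀ i, c (s i) = i) :
    ∃ Z : Finset Y, Dom r Z ∧ Z.card = Fintype.card I ∧ Z.image c = Finset.univ := by
  classical
  by_contra hcon
  push Not at hcon
  obtain ⟨i0⟩ : Nonempty I := Fintype.card_pos_iff.1 (by omega)
  let D : Finset (Finset Y) := {Z | Dom r Z ∧ Fintype.card I = Z.card + 1 ∧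
    Z.image c = Finset.univ.erase i0}
  let R : Finset (Finset Y) := {Z | Dom r Z ∧ Z.card = Fintype.card I}
  let Z0 : Finset Y := (Finset.univ.erase i0).image s
  have hcount := Finset.sum_card_bipartiteAbove_eq_sum_card_bipartiteBelow
    (s := D) (t := R) (fun a b => a ⊆ b)
  have hmemD : ∀ Z, Z ∈ D ↔ Dom r Z ∧ Fintype.card I = Z.card + 1 ∧
    Z.image c = Finset.univ.erase i0 := fun Z => by simp [D]
  have hmemR : ∀ Z, Z ∈ R ↔ Dom r Z ∧ Z.card = Fintype.card I := fun Z => by simp [R]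
  -- rooms above a door
  have habove : ∀ Z, Fintype.card I = Z.card + 1 → ∀ W,
      (W ∈ R ∧ Z ⊆ W) ↔ ∃ x, x ∉ Z ∧ Dom r (insert x Z) ∧ W = insert x Z := by
    intro Z hZ W
    rw [hmemR]
    constructor
    · rintro ⟨⟨hW, hWc⟩, hsub⟩
      obtain ⟨x, hx, rfl⟩ := (Finset.covBy_iff_exists_insert.1
        (Finset.covBy_iff_card_sdiff_eq_one.2 ⟨hsub, by
          rw [Finset.card_sdiff_of_subset hsub]; omega⟩))
      exact ⟨x, hx, hW, rfl⟩
    · rintro ⟨x, hx, hW, rfl⟩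
      refine ⟨⟨hW, ?_⟩, Finset.subset_insert _ _⟩
      rw [Finset.card_insert_of_notMem hx, hZ]
  have hZ0D : Z0 ∈ D := by
    rw [hmemD]
    refine ⟨?_, ?_, ?_⟩
    · intro w
      by_cases hw : ∃ k, w = s k
      · obtain ⟨k, rfl⟩ := hw
        exact ⟨k, fun y _ => hs1 k y⟩
      · refine ⟨i0, fun y hy => ?_⟩
        obtain ⟨k, hk, rfl⟩ := Finset.mem_image.1 hy
        exact (hs2 i0 k w (Finset.ne_of_mem_erase hk).symm
          (fun ⟨k, hk⟩ => hw ⟨k, hk.symm⟩)).le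
    · rw [Finset.card_image_of_injective _ hs, Finset.card_erase_of_mem (Finset.mem_univ _),
        Finset.card_univ]
      omega
    · ext i
      simp [Z0, Finset.mem_image, hc]
  have hZ0card : (Finset.bipartiteAbove (fun a b => a ⊆ b) R Z0).card = 1 := by
    have hsi0 : s i0 ∉ Z0 := by
      intro h
      obtain ⟨k, hk, he⟩ := Finset.mem_image.1 h
      exact Finset.ne_of_mem_erase hk (hs he)
    obtain ⟨x, hx1, hx2⟩ := Finset.exists_max_image (Z0ᶜ) (r i0)
      ⟨s i0, Finset.mem_compl.2 hsi0⟩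
    rw [Finset.mem_compl] at hx1
    rw [Finset.card_eq_one]
    refine ⟨insert x Z0, ?_⟩
    ext W
    rw [Finset.mem_bipartiteAbove, habove Z0 ((hmemD _).1 hZ0D).2.1, Finset.mem_singleton]
    have hin : ∀ k, k ≠ i0 → s k ∈ Z0 := fun k hk =>
      Finset.mem_image_of_mem s (Finset.mem_erase.2 ⟨hk, Finset.mem_univ _⟩)
    constructor
    · rintro ⟨x', hx', hD, rfl⟩
      have : x' = x := by
        apply hr i0
        apply le_antisymm (hx2 x' (Finset.mem_compl.2 hx'))
        obtain ⟨k, hk⟩ := hD x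
        by_cases hki : k = i0
        · subst hki
          exact hk _ (Finset.mem_insert_self _ _)
        · exfalso
          have h1 := hk _ (Finset.mem_insert_of_mem (hin k hki))
          have h2 := hr k (le_antisymm h1 (hs1 k x))
          exact hx1 (h2 ▸ hin k hki)
      rw [this]
    · rintro rfl
      refine ⟨x, hx1, ?_, rfl⟩
      intro w
      by_cases hw : w ∈ Z0
      · obtain ⟨k, hk, rfl⟩ := Finset.mem_image.1 hw
        exact ⟨k, fun y _ => hs1 k y⟩
      · refine ⟨i0, fun y hy => ?_⟩
        rcases Finset.mem_insert.1 hy with rfl | hy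
        · exact hx2 w (Finset.mem_compl.2 hw)
        · obtain ⟨k, hk, rfl⟩ := Finset.mem_image.1 hy
          by_cases hws : w ∈ Set.range s
          · obtain ⟨l, rfl⟩ := hws
            have : l = i0 := by
              by_contra h
              exact hw (hin l h)
            subst this
            exact hs1 _ _
          · exact (hs2 i0 k w (Finset.ne_of_mem_erase hk).symm hws).le
  have hdoor : ∀ Z ∈ D, Z ≠ Z0 →
      (Finset.bipartiteAbove (fun a b => a ⊆ b) R Z).card = 2 := by
    intro Z hZ hne
    obtain ⟨hdom, hcard, himg⟩ := (hmemD _).1 hZ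
    obtain ⟨u, v, huv, hu, hv, H⟩ := door_two r hr Z hdom
      (Finset.card_pos.1 (by omega)) hcard (by
        intro i
        refine ⟨s i, fun j hj => ?_⟩
        by_contra hno
        push Not at hno
        apply hne
        have hall : ∀ y ∈ Z, ∃ k, s k = y := by
          intro y hy
          by_contra h
          exact absurd (hs2 j i y hj h) (not_lt.2 (hno y hy))
        ext y
        constructor
        · intro hy
          obtain ⟨k, rfl⟩ := hall y hy
          have := Finset.mem_image_of_mem c hy
          rw [himg, hc] at this
          exact Finset.mem_image_of_mem s this
        · intro hy
          obtain ⟨k, hk, rfl⟩ := Finset.mem_image.1 hy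
          rw [← himg] at hk
          obtain ⟨y, hyZ, rfl⟩ := Finset.mem_image.1 hk
          obtain ⟨l, rfl⟩ := hall y hyZ
          rwa [hc])
    rw [Finset.card_eq_two]
    refine ⟨insert u Z, insert v Z, ?_, ?_⟩
    · intro h
      have : u ∈ insert v Z := h ▸ Finset.mem_insert_self _ _
      rcases Finset.mem_insert.1 this with h | h
      · exact huv h
      · exact hu h
    · ext W
      rw [Finset.mem_bipartiteAbove, habove Z hcard, Finset.mem_insert, Finset.mem_singleton]
      constructor
      · rintro ⟨x, hx, hD, rfl⟩
        rcases (H x).1 ⟨hx, hD⟩ with rfl | rfl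
        · exact Or.inl rfl
        · exact Or.inr rfl
      · rintro (rfl | rfl)
        · exact ⟨u, hu, ((H u).2 (Or.inl rfl)).2, rfl⟩
        · exact ⟨v, hv, ((H v).2 (Or.inr rfl)).2, rfl⟩
  have hroom : ∀ W ∈ R, Even (Finset.bipartiteBelow (fun a b => a ⊆ b) D W).card := by
    intro W hW
    obtain ⟨hdom, hcard⟩ := (hmemR _).1 hW
    have hnc := hcon W hdom hcard
    have hbelow : ∀ Z, (Z ∈ D ∧ Z ⊆ W) ↔ ∃ y ∈ W, Z = W.erase y ∧
        (W.erase y).image c = Finset.univ.erase i0 := by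
      intro Z
      rw [hmemD]
      constructor
      · rintro ⟨⟨hZ, hZc, hZi⟩, hsub⟩
        obtain ⟨y, hy, rfl⟩ := (Finset.covBy_iff_exists_insert.1
          (Finset.covBy_iff_card_sdiff_eq_one.2 ⟨hsub, by
            rw [Finset.card_sdiff_of_subset hsub]; omega⟩))
        refine ⟨y, Finset.mem_insert_self _ _, ?_, ?_⟩
        · rw [Finset.erase_insert hy]
        · rw [Finset.erase_insert hy, hZi]
      · rintro ⟨y, hy, rfl, hi⟩
        refine ⟨⟨hdom.mono (Finset.erase_subset _ _), ?_, hi⟩, Finset.erase_subset _ _⟩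
        rw [Finset.card_erase_of_mem hy]
        have := Finset.card_pos.2 ⟨y, hy⟩
        omega
    by_cases hex : ∃ y ∈ W, (W.erase y).image c = Finset.univ.erase i0
    · obtain ⟨y0, hy0, hy0i⟩ := hex
      have hWi : W.image c = Finset.univ.erase i0 := by
        have h1 : Finset.univ.erase i0 ⊆ W.image c := by
          rw [← hy0i]; exact Finset.image_subset_image (Finset.erase_subset _ _)
        have h2 : i0 ∉ W.image c := by
          intro h
          apply hnc
          ext i
          simp only [Finset.mem_univ, iff_true]
          by_cases hi : i = i0
          · rw [hi]; exact h
          · exact h1 (by simp [hi])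
        apply Finset.Subset.antisymm _ h1
        intro i hi
        refine Finset.mem_erase.2 ⟨?_, Finset.mem_univ _⟩
        rintro rfl
        exact h2 hi
      obtain ⟨a, ha, b, hb, hab, hfab, huniq⟩ := pigeon_pair W c (by
        rw [hWi, Finset.card_erase_of_mem (Finset.mem_univ _), Finset.card_univ]; omega)
      have hers : ∀ a ∈ W, ∀ b ∈ W, a ≠ b → c a = c b →
          (W.erase a).image c = Finset.univ.erase i0 := by
        intro a ha b hb hab hf
        rw [← hWi]
        apply Finset.Subset.antisymm (Finset.image_subset_image (Finset.erase_subset _ _))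
        intro y hy
        obtain ⟨x, hx, rfl⟩ := Finset.mem_image.1 hy
        by_cases hxa : x = a
        · subst hxa
          rw [hf]
          exact Finset.mem_image_of_mem c (Finset.mem_erase.2 ⟨hab.symm, hb⟩)
        · exact Finset.mem_image_of_mem c (Finset.mem_erase.2 ⟨hxa, hx⟩)
      have : (Finset.bipartiteBelow (fun a b => a ⊆ b) D W).card = 2 := by
        rw [Finset.card_eq_two]
        refine ⟨W.erase a, W.erase b, ?_, ?_⟩
        · intro h
          have : a ∈ W.erase b := Finset.mem_erase.2 ⟨hab, ha⟩
          rw [← h] at this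
          exact Finset.notMem_erase _ _ this
        · ext Z
          rw [Finset.mem_bipartiteBelow, hbelow, Finset.mem_insert, Finset.mem_singleton]
          constructor
          · rintro ⟨y, hy, rfl, hyi⟩
            have h1 : c y ∈ (W.erase y).image c := by
              rw [hyi, ← hWi]; exact Finset.mem_image_of_mem c hy
            obtain ⟨z, hz, hzy⟩ := Finset.mem_image.1 h1
            rcases huniq z (Finset.mem_of_mem_erase hz) y hy hzy (Finset.ne_of_mem_erase hz)
              with ⟨-, h⟩ | ⟨-, h⟩
            · right; rw [h]
            · left; rw [h]
          · rintro (rfl | rfl)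
            · exact ⟨a, ha, rfl, hers a ha b hb hab hfab⟩
            · exact ⟨b, hb, rfl, hers b hb a ha hab.symm hfab.symm⟩
      rw [this]
      exact even_two
    · have : Finset.bipartiteBelow (fun a b => a ⊆ b) D W = ∅ := by
        rw [Finset.eq_empty_iff_forall_notMem]
        intro Z hZ
        rw [Finset.mem_bipartiteBelow, hbelow] at hZ
        obtain ⟨y, hy, -, h⟩ := hZ
        exact hex ⟨y, hy, h⟩
      rw [this]
      simp
  have hev : Even (∑ b ∈ R, (Finset.bipartiteBelow (fun a b => a ⊆ b) D b).card) :=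
    Finset.even_sum _ hroom
  rw [← hcount, ← Finset.add_sum_erase _ _ hZ0D, hZ0card] at hev
  have hev2 : Even (∑ x ∈ D.erase Z0, (Finset.bipartiteAbove (fun a b => a ⊆ b) R x).card) :=
    Finset.even_sum _ (fun Z hZ => by
      rw [hdoor Z (Finset.mem_of_mem_erase hZ) (Finset.ne_of_mem_erase hZ)]; exact even_two)
  obtain ⟨p, hp⟩ := hev
  obtain ⟨q, hq⟩ := hev2
  omega

/-- Discrete Brouwer on the grid of mesh `1/N`. -/
lemma grid_exists (n : ℕ) (hn : 2 ≤ n) (N : ℕ)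
    (c : {x : Fin n → Fin (N+1) // ∑ i, (x i : ℕ) = N} → Fin n) :
    ∃ y0 : {x : Fin n → Fin (N+1) // ∑ i, (x i : ℕ) = N}, ∀ i,
      ((y0.1 i : ℕ) ≤ n) ∨ ∃ y : {x : Fin n → Fin (N+1) // ∑ i, (x i : ℕ) = N}, c y = i ∧
        ∀ j, (y.1 j : ℕ) ≤ y0.1 j + n ∧ (y0.1 j : ℕ) ≤ y.1 j + n := by
  classical
  let X := {x : Fin n → Fin (N+1) // ∑ i, (x i : ℕ) = N}
  let M := Fintype.card X
  let e : X ≃ Fin M := Fintype.equivFin X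
  let r : Fin n → X ⊕ Fin n → ℕ := fun i => Sum.elim (fun x => 1 + ((x.1 i : ℕ) * M + e x))
    (fun j => if j = i then 0 else 1 + ((N + 1) * M + j))
  have hrl : ∀ i x, r i (Sum.inl x) = 1 + ((x.1 i : ℕ) * M + e x) := fun i x => rfl
  have hrr : ∀ i j, r i (Sum.inr j) = if j = i then 0 else 1 + ((N + 1) * M + j) :=
    fun i j => rfl
  have hlt : ∀ i (x : X), (x.1 i : ℕ) * M + e x < (N+1) * M := by
    intro i x
    have h1 := (e x).2
    have h2 : (x.1 i : ℕ) + 1 ≤ N + 1 := (x.1 i).2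
    calc (x.1 i : ℕ) * M + e x < ((x.1 i : ℕ) + 1) * M := by rw [add_mul]; omega
      _ ≤ _ := Nat.mul_le_mul_right _ h2
  have hmono : ∀ i (x y : X), r i (Sum.inl x) ≤ r i (Sum.inl y) → (x.1 i : ℕ) ≤ y.1 i := by
    intro i x y h
    rw [hrl, hrl] at h
    by_contra hc
    have h1 := (e y).2
    have h3 : (y.1 i : ℕ) + 1 ≤ x.1 i := by omega
    have h4 := Nat.mul_le_mul_right M h3
    rw [add_mul] at h4
    omega
  have hinj : ∀ i, Function.Injective (r i) := by
    intro i
    rintro (x | j) (y | k) h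
    · have h1 := hmono i x y h.le
      have h2 := hmono i y x h.ge
      have h3 : (x.1 i : ℕ) = y.1 i := le_antisymm h1 h2
      rw [hrl, hrl, h3] at h
      have : e x = e y := Fin.ext (by omega)
      rw [e.injective this]
    · exfalso
      rw [hrl, hrr] at h
      have := hlt i x
      split_ifs at h <;> omega
    · exfalso
      rw [hrl, hrr] at h
      have := hlt i y
      split_ifs at h <;> omega
    · rw [hrr, hrr] at h
      split_ifs at h with h1 h2 h2
      · rw [h1, h2]
      · omega
      · omega
      · congr 1; exact Fin.ext (by omega)
  obtain ⟨Z, hD, hcard, himg⟩ := scarf (I := Fin n) (Y := X ⊕ Fin n) (by simpa using hn) r hinj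
    Sum.inr Sum.inr_injective (by intro i y; simp [hrr]) (by
      rintro i j (x | k) hij hx
      · rw [hrl, hrr, if_neg hij.symm]
        have := hlt i x
        omega
      · exact absurd ⟨k, rfl⟩ hx) (Sum.elim c id) (fun i => rfl)
  -- dominance in terms of grid points
  have hdom : ∀ x : X, ∃ i, Sum.inr i ∉ Z ∧ ∀ y : X, Sum.inl y ∈ Z → (x.1 i : ℕ) ≤ y.1 i := by
    intro x
    obtain ⟨i, hi⟩ := hD (Sum.inl x)
    refine ⟨i, ?_, fun y hy => hmono i x y (hi _ hy)⟩
    intro h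
    have := hi _ h
    rw [hrl, hrr, if_pos rfl] at this
    omega
  have hcol : ∀ i, Sum.inr i ∉ Z → ∃ y : X, Sum.inl y ∈ Z ∧ c y = i := by
    intro i hi
    have this := Finset.mem_univ i
    rw [← himg] at this
    obtain ⟨y, hy, h⟩ := Finset.mem_image.1 this
    rcases y with y | k
    · exact ⟨y, hy, h⟩
    · exact absurd ((show k = i from h) ▸ hy) hi
  let k0 : Fin n := ⟨0, by omega⟩
  have hmk : ∀ g : Fin n → ℕ, ∑ i, g i ≤ N → ∃ x : X, ∀ i, g i ≤ x.1 i := by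
    intro g hg
    let g' : Fin n → ℕ := fun i => g i + if i = k0 then N - ∑ i, g i else 0
    have hs : ∑ i, g' i = N := by
      simp only [g', Finset.sum_add_distrib, Finset.sum_ite_eq', Finset.mem_univ, if_true]
      omega
    have hle : ∀ i, g' i < N + 1 := fun i => by
      have := Finset.single_le_sum (f := g') (fun _ _ => Nat.zero_le _) (Finset.mem_univ i)
      omega
    refine ⟨⟨fun i => ⟨g' i, hle i⟩, hs⟩, fun i => ?_⟩
    show g i ≤ g' i
    exact Nat.le_add_right _ _
  obtain ⟨x0, -⟩ := hmk 0 (by simp)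
  obtain ⟨i0, hi0, -⟩ := hdom x0
  obtain ⟨y0, hy0, -⟩ := hcol i0 hi0
  have hmin : ∀ i, ∃ m : ℕ, (Sum.inr i ∈ Z → m = 0) ∧
      (∀ y : X, Sum.inl y ∈ Z → m ≤ y.1 i) ∧
      (Sum.inr i ∉ Z → ∃ y : X, Sum.inl y ∈ Z ∧ m = y.1 i) := by
    intro i
    by_cases hi : Sum.inr i ∈ Z
    · exact ⟨0, fun _ => rfl, fun _ _ => Nat.zero_le _, fun h => absurd hi h⟩
    · obtain ⟨y, hy, hy'⟩ := Finset.exists_min_image ({y : X | Sum.inl y ∈ Z} : Finset X)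
        (fun y => (y.1 i : ℕ)) ⟨y0, by simp [hy0]⟩
      simp only [Finset.mem_filter, Finset.mem_univ, true_and] at hy hy'
      exact ⟨y.1 i, fun h => absurd h hi, hy', fun _ => ⟨y, hy, rfl⟩⟩
  choose m hm0 hmle hmatt using hmin
  have hsum : N < ∑ i, m i + n := by
    by_contra hc
    obtain ⟨x, hx⟩ := hmk (fun i => m i + 1) (by
      rw [Finset.sum_add_distrib]; simp; omega)
    obtain ⟨i, hi, hi'⟩ := hdom x
    obtain ⟨y, hy, hym⟩ := hmatt i hi
    have h1 := hi' y hy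
    have h2 := hx i
    omega
  have hub : ∀ y : X, Sum.inl y ∈ Z → ∀ i, (y.1 i : ℕ) ≤ m i + n := by
    intro y hy i
    have h1 : ∑ j ∈ Finset.univ.erase i, m j ≤ ∑ j ∈ Finset.univ.erase i, (y.1 j : ℕ) :=
      Finset.sum_le_sum (fun j _ => hmle j y hy)
    have h2 := Finset.add_sum_erase Finset.univ m (Finset.mem_univ i)
    have h3 := Finset.add_sum_erase Finset.univ (fun j => (y.1 j : ℕ)) (Finset.mem_univ i)
    have h4 := y.2
    omega
  refine ⟨y0, fun i => ?_⟩
  by_cases hi : Sum.inr i ∈ Z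
  · left
    have := hub y0 hy0 i
    rw [hm0 i hi] at this
    omega
  · right
    obtain ⟨y, hy, hyc⟩ := hcol i hi
    refine ⟨y, hyc, fun j => ?_⟩
    have h1 := hub y0 hy0 j
    have h2 := hub y hy j
    have h3 := hmle j y hy
    have h4 := hmle j y0 hy0
    omega

/-- Brouwer's fixed point theorem on the standard simplex. -/
lemma brouwer_simplex (n : ℕ) (hn : 2 ≤ n) (F : (Fin n → ℝ) → (Fin n → ℝ))
    (hF : Continuous F) (hmap : ∀ x ∈ stdSimplex ℝ (Fin n), F x ∈ stdSimplex ℝ (Fin n)) :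
    ∃ x ∈ stdSimplex ℝ (Fin n), F x = x := by
  classical
  have hne : (Finset.univ : Finset (Fin n)).Nonempty := ⟨⟨0, by omega⟩, Finset.mem_univ _⟩
  have hcpt := isCompact_stdSimplex ℝ (Fin n)
  let g : (Fin n → ℝ) → ℝ := fun x => Finset.univ.inf' hne (fun i => F x i - x i)
  have hg : Continuous g := by
    apply Continuous.finset_inf'_apply
    intro i _
    exact ((continuous_apply i).comp hF).sub (continuous_apply i)
  have happrox : ∀ ε > 0, ∃ x ∈ stdSimplex ℝ (Fin n), ∀ i, -ε ≤ F x i - x i := by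
    intro ε hε
    have huc := hcpt.uniformContinuousOn_of_continuous hF.continuousOn
    rw [Metric.uniformContinuousOn_iff] at huc
    obtain ⟨δ, hδ, hd⟩ := huc (ε/2) (by positivity)
    obtain ⟨N, hN⟩ := exists_nat_gt (max (n / δ) (n / (ε/2)))
    have hnpos : (0:ℝ) < n := by exact_mod_cast (by omega : 0 < n)
    have hN0 : (0:ℝ) < N := lt_of_le_of_lt (le_max_of_le_left (by positivity)) hN
    have hN1 : (n:ℝ) / N < δ := by
      have := lt_of_le_of_lt (le_max_left _ _) hN
      rw [div_lt_iff₀ hδ] at this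
      rw [div_lt_iff₀ hN0]; linarith
    have hN2 : (n:ℝ) / N < ε/2 := by
      have := lt_of_le_of_lt (le_max_right _ _) hN
      rw [div_lt_iff₀ (by positivity)] at this
      rw [div_lt_iff₀ hN0]; linarith
    let p : {x : Fin n → Fin (N+1) // ∑ i, (x i : ℕ) = N} → Fin n → ℝ :=
      fun x i => ((x.1 i : ℕ) : ℝ) / N
    have hp : ∀ x, p x ∈ stdSimplex ℝ (Fin n) := by
      intro x
      refine ⟨fun i => by positivity, ?_⟩
      simp only [p]
      rw [← Finset.sum_div, ← Nat.cast_sum, x.2, div_self hN0.ne']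
    have hc : ∀ x, ∃ i, p x i ≤ F (p x) i := by
      intro x
      by_contra h
      push Not at h
      have := Finset.sum_lt_sum_of_nonempty hne (fun i _ => h i)
      rw [(hmap _ (hp x)).2, (hp x).2] at this
      exact lt_irrefl _ this
    choose c hc using hc
    obtain ⟨y0, hy0⟩ := grid_exists n hn N c
    refine ⟨p y0, hp y0, fun i => ?_⟩
    rcases hy0 i with h | ⟨y, hy, hclose⟩
    · have h1 : p y0 i ≤ n / N := by
        simp only [p]
        gcongr
      have := (hmap _ (hp y0)).1 i
      linarith
    · have hle : ∀ j, p y j ≤ p y0 j + n / N ∧ p y0 j ≤ p y j + n / N := by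
        intro j
        obtain ⟨h1, h2⟩ := hclose j
        simp only [p]
        rw [← add_div, ← add_div]
        constructor
        · gcongr; exact_mod_cast h1
        · gcongr; exact_mod_cast h2
      have hdist : dist (p y) (p y0) < δ := by
        rw [dist_pi_lt_iff hδ]
        intro j
        rw [Real.dist_eq, abs_lt]
        obtain ⟨h1, h2⟩ := hle j
        constructor <;> linarith
      have h1 := hd _ (hp y) _ (hp y0) hdist
      have h2 := (dist_le_pi_dist (F (p y)) (F (p y0)) i).trans_lt h1
      rw [Real.dist_eq, abs_lt] at h2
      have h3 := hc y
      rw [hy] at h3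
      have h4 := (hle i).2
      linarith [h2.2]
  obtain ⟨x1, hx1, -⟩ := happrox 1 one_pos
  obtain ⟨x, hx, hmax⟩ := hcpt.exists_isMaxOn ⟨x1, hx1⟩ hg.continuousOn
  refine ⟨x, hx, ?_⟩
  have hgx : 0 ≤ g x := by
    by_contra hneg
    push Not at hneg
    obtain ⟨z, hz, hz'⟩ := happrox (-(g x)/2) (by linarith)
    have h1 : g z ≤ g x := hmax hz
    have h2 : -(-(g x)/2) ≤ g z := Finset.le_inf' _ _ (fun i _ => hz' i)
    linarith
  have hge : ∀ i, x i ≤ F x i := by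
    intro i
    have : g x ≤ F x i - x i := Finset.inf'_le (fun i => F x i - x i) (Finset.mem_univ i)
    linarith
  have heq := (Finset.sum_eq_sum_iff_of_le (fun i (_ : i ∈ Finset.univ) => hge i)).1
    (by rw [hx.2, (hmap x hx).2])
  funext i
  exact (heq i (Finset.mem_univ i)).symm


/-- existence of equilibria. For every density `ρ ∈ [0,1]` and any transition
probabilities `A` satisfying the normalization property, there is at least one nonnegative
equilibrium with total mass `ρ`. -/
theorem existence_of_equilibria
    (n : ℕ) (hn : 2 ≤ n) (ρ : ℝ) (hρ0 : 0 ≤ ρ) (hρ1 : ρ ≤ 1)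
    (A : Fin n → Fin n → Fin n → ℝ)
    (hA_nonneg : ∀ h k j, 0 ≤ A h k j) (hA_le : ∀ h k j, A h k j ≤ 1)
    (hA_sum : ∀ h k, ∑ j, A h k j = 1) :
    ∃ f : Fin n → ℝ, (∀ j, 0 ≤ f j) ∧ (∑ j, f j = ρ) ∧
      (∀ j : Fin n, ∑ h, ∑ k, A h k j * f h * f k = ρ * f j) := by
  let F : (Fin n → ℝ) → (Fin n → ℝ) := fun x j => ∑ h, ∑ k, A h k j * x h * x k
  obtain ⟨x, hx, hfix⟩ := brouwer_simplex n hn F (by fun_prop) (by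
    intro x hx
    refine ⟨fun j => Finset.sum_nonneg fun h _ => Finset.sum_nonneg fun k _ =>
      mul_nonneg (mul_nonneg (hA_nonneg h k j) (hx.1 h)) (hx.1 k), ?_⟩
    have hx2 := hx.2
    simp only [F]
    rw [Finset.sum_comm]
    have : ∀ h, ∑ j, ∑ k, A h k j * x h * x k = x h := by
      intro h
      rw [Finset.sum_comm]
      calc ∑ k, ∑ j, A h k j * x h * x k = ∑ k, x h * x k := by
            refine Finset.sum_congr rfl fun k _ => ?_
            rw [← Finset.sum_mul, ← Finset.sum_mul, hA_sum, one_mul]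
        _ = x h := by rw [← Finset.mul_sum, hx2, mul_one]
    rw [Finset.sum_congr rfl fun h _ => this h, hx2])
  refine ⟨fun j => ρ * x j, fun j => mul_nonneg hρ0 (hx.1 j), ?_, fun j => ?_⟩
  · rw [← Finset.mul_sum, hx.2, mul_one]
  · have hj : ∑ h, ∑ k, A h k j * x h * x k = x j := congrFun hfix j
    calc ∑ h, ∑ k, A h k j * (ρ * x h) * (ρ * x k)
        = ρ * (ρ * ∑ h, ∑ k, A h k j * x h * x k) := by
          simp only [Finset.mul_sum]
          refine Finset.sum_congr rfl fun h _ => Finset.sum_congr rfl fun k _ => by ring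
      _ = ρ * (ρ * x j) := by rw [hj]
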